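/- Let the index set {1,…,N} be partitioned into k clusters of sizes n_1,…,n_k, and let E be the N×N matrix whose (a,b) block is E^{(a,b)} := (1/2)(1/n_a + 1/n_b)·11ᵀ. Then: (i) rank(E) ∈ {1,2}; (ii) the eigenvalue λ of E of largest magnitude satisfies λ ≥ k; (iii) if rank(E) = 2, then the other nonzero eigenvalue of E is negative; (iv) every eigenvector of E corresponding to a nonzero eigenvalue lies in the span of the cluster indicator vectors {1_a}_{a=1}^k. -/

import Mathlib

open scoped BigOperators
open Matrix

namespace Stmt1

/-- Index type for `N` points partitioned into `k` clusters of sizes `n 0, …, n (k−1)`. -/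
abbrev Idx (k : ℕ) (n : Fin k → ℕ) := (a : Fin k) × Fin (n a)

/-- The indicator vector `1_a` of cluster `a`. -/
def indicator {k : ℕ} {n : Fin k → ℕ} (a : Fin k) : Idx k n → ℝ :=
  fun p => if p.1 = a then 1 else 0

/-- `(λ, v)` is an eigenpair of the matrix `E`. -/
def IsEigenPair {k : ℕ} {n : Fin k → ℕ} (E : Matrix (Idx k n) (Idx k n) ℝ)
    (lam : ℝ) (v : Idx k n → ℝ) : Prop :=
  v ≠ 0 ∧ E *ᵥ v = lam • v

/-- `λ` is an eigenvalue of the matrix `E`. -/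
def IsEigenvalue {k : ℕ} {n : Fin k → ℕ} (E : Matrix (Idx k n) (Idx k n) ℝ)
    (lam : ℝ) : Prop :=
  ∃ v, IsEigenPair E lam v

end Stmt1

open Stmt1

/-! With `1` the all-ones vector and `w` the vector constantly `1 / (2 n_a)` on cluster `a`, we have
`E = 1 wᵀ + w 1ᵀ`. A matrix `u vᵀ + v uᵀ` maps everything into `span {u, v}`, so it has rank at
most `2` and its eigenvectors with nonzero eigenvalue lie in that span. On the coefficients with
respect to `u, v` it acts as `!![u ⬝ v, v ⬝ v; u ⬝ u, u ⬝ v]`, whose eigenvalues are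
`u ⬝ v ± ‖u‖ ‖v‖`. Here `1 ⬝ w = k / 2`, so by Cauchy–Schwarz the larger one is at least `k` and the
smaller one is at most `0`. -/

open Module.End

/-- The symmetrized outer product `u vᵀ + v uᵀ` of two vectors, without the customary factor `1 / 2`
so that it makes sense over any commutative semiring. -/
def symmOuter {ι R : Type*} [CommSemiring R] (u v : ι → R) : Matrix ι ι R :=
  vecMulVec u v + vecMulVec v u

section Algebra

variable {ι : Type*} [Fintype ι]

theorem symmOuter_mulVec {R : Type*} [CommSemiring R] (u v x : ι → R) :
    symmOuter u v *ᵥ x = (v ⬝ᵥ x) • u + (u ⬝ᵥ x) • v := by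
  simp only [symmOuter, add_mulVec, vecMulVec_mulVec, op_smul_eq_smul]

theorem trace_symmOuter {R : Type*} [CommSemiring R] (u v : ι → R) :
    (symmOuter u v).trace = 2 * (u ⬝ᵥ v) := by
  rw [symmOuter, trace_add, trace_vecMulVec, trace_vecMulVec, dotProduct_comm v u, two_mul]

theorem range_symmOuter_mulVecLin_le {R : Type*} [CommSemiring R] (u v : ι → R) :
    LinearMap.range (symmOuter u v).mulVecLin ≤ Submodule.span R {u, v} := by
  rintro _ ⟨x, rfl⟩
  rw [mulVecLin_apply, symmOuter_mulVec]
  exact Submodule.mem_span_pair.mpr ⟨_, _, rfl⟩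

variable {K : Type*} [Field K]

theorem rank_symmOuter_le_two (u v : ι → K) : (symmOuter u v).rank ≤ 2 := by
  classical
  calc (symmOuter u v).rank
      ≤ Module.finrank K (Submodule.span K {u, v}) :=
        Submodule.finrank_mono (range_symmOuter_mulVecLin_le u v)
    _ ≤ 2 := by
        rw [← Finset.coe_pair]
        exact (finrank_span_finset_le_card _).trans Finset.card_le_two

theorem rank_symmOuter_ne_zero [NeZero (2 : K)] {u v : ι → K} (huv : u ⬝ᵥ v ≠ 0) :
    (symmOuter u v).rank ≠ 0 := by
  classical
  intro hrank
  have hzero : symmOuter u v = 0 := by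
    rw [Matrix.rank, Submodule.finrank_eq_zero, LinearMap.range_eq_bot] at hrank
    exact toLin'.injective (hrank.trans (map_zero toLin').symm)
  have htrace := trace_symmOuter u v
  rw [hzero, trace_zero] at htrace
  exact mul_ne_zero two_ne_zero huv htrace.symm

theorem mem_span_pair_of_hasEigenvector_symmOuter {u v x : ι → K} {μ : K} (hμ : μ ≠ 0)
    (hx : HasEigenvector (symmOuter u v).mulVecLin μ x) : x ∈ Submodule.span K {u, v} := by
  rw [← Submodule.smul_mem_iff _ hμ, ← hx.apply_eq_smul]
  exact range_symmOuter_mulVecLin_le u v (LinearMap.mem_range_self _ x)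

theorem sq_sub_dotProduct_of_hasEigenvalue_symmOuter {u v : ι → K} {μ : K} (hμ : μ ≠ 0)
    (hμE : HasEigenvalue (symmOuter u v).mulVecLin μ) :
    (μ - u ⬝ᵥ v) ^ 2 = (u ⬝ᵥ u) * (v ⬝ᵥ v) := by
  obtain ⟨x, hx⟩ := hμE.exists_hasEigenvector
  have hEx : (v ⬝ᵥ x) • u + (u ⬝ᵥ x) • v = μ • x := by
    rw [← symmOuter_mulVec]
    exact hx.apply_eq_smul
  have hu : (μ - u ⬝ᵥ v) * (u ⬝ᵥ x) = (u ⬝ᵥ u) * (v ⬝ᵥ x) := by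
    have h := congrArg (u ⬝ᵥ ·) hEx
    simp only [dotProduct_add, dotProduct_smul, smul_eq_mul] at h
    linear_combination -h
  have hv : (μ - u ⬝ᵥ v) * (v ⬝ᵥ x) = (v ⬝ᵥ v) * (u ⬝ᵥ x) := by
    have h := congrArg (v ⬝ᵥ ·) hEx
    simp only [dotProduct_add, dotProduct_smul, smul_eq_mul, dotProduct_comm v u] at h
    linear_combination -h
  have hcoord : u ⬝ᵥ x ≠ 0 ∨ v ⬝ᵥ x ≠ 0 := by
    by_contra! h
    rw [h.1, h.2, zero_smul, zero_smul, add_zero] at hEx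
    exact smul_ne_zero hμ hx.2 hEx.symm
  rcases hcoord with hux | hvx
  · apply mul_right_cancel₀ hux
    linear_combination (μ - u ⬝ᵥ v) * hu + (u ⬝ᵥ u) * hv
  · apply mul_right_cancel₀ hvx
    linear_combination (μ - u ⬝ᵥ v) * hv + (v ⬝ᵥ v) * hu

end Algebra

section Real

variable {ι : Type*} [Fintype ι]

theorem dotProduct_self_nonneg {R : Type*} [Semiring R] [LinearOrder R] [ExistsAddOfLE R]
    [PosMulMono R] [AddLeftMono R] (u : ι → R) : 0 ≤ u ⬝ᵥ u :=
  Finset.sum_nonneg fun i _ => mul_self_nonneg (u i)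

theorem dotProduct_le_sqrt_mul_sqrt (u v : ι → ℝ) : u ⬝ᵥ v ≤ √(u ⬝ᵥ u) * √(v ⬝ᵥ v) := by
  simpa only [dotProduct, sq] using Real.sum_mul_le_sqrt_mul_sqrt Finset.univ u v

variable {u v : ι → ℝ}

theorem hasEigenvalue_symmOuter_add_sqrt (h : u ⬝ᵥ v + √(u ⬝ᵥ u) * √(v ⬝ᵥ v) ≠ 0) :
    HasEigenvalue (symmOuter u v).mulVecLin (u ⬝ᵥ v + √(u ⬝ᵥ u) * √(v ⬝ᵥ v)) := by
  have hu := Real.mul_self_sqrt (dotProduct_self_nonneg u)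
  have hv := Real.mul_self_sqrt (dotProduct_self_nonneg v)
  set a := √(u ⬝ᵥ u)
  set b := √(v ⬝ᵥ v)
  set x := b • u + a • v with hx_def
  have hux : u ⬝ᵥ x = a * (u ⬝ᵥ v + a * b) := by
    simp only [hx_def, dotProduct_add, dotProduct_smul, smul_eq_mul, ← hu]
    ring
  have hvx : v ⬝ᵥ x = b * (u ⬝ᵥ v + a * b) := by
    simp only [hx_def, dotProduct_add, dotProduct_smul, smul_eq_mul, ← hv, dotProduct_comm v u]
    ring
  refine hasEigenvalue_of_hasEigenvector (x := x) ⟨mem_eigenspace_iff.mpr ?_, fun hx0 => ?_⟩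
  · rw [mulVecLin_apply, symmOuter_mulVec, hux, hvx]
    module
  · have ha : a = 0 := by simpa [hx0, h] using hux
    have hu0 : u = 0 := dotProduct_self_eq_zero.mp (by rw [← hu, ha, zero_mul])
    exact h (by rw [hu0, ha, zero_dotProduct, zero_mul, add_zero])

theorem hasEigenvalue_symmOuter_cases {μ : ℝ} (hμ : μ ≠ 0)
    (hμE : HasEigenvalue (symmOuter u v).mulVecLin μ) :
    μ = u ⬝ᵥ v + √(u ⬝ᵥ u) * √(v ⬝ᵥ v) ∨ μ = u ⬝ᵥ v - √(u ⬝ᵥ u) * √(v ⬝ᵥ v) := by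
  have hsq : (μ - u ⬝ᵥ v) ^ 2 = (√(u ⬝ᵥ u) * √(v ⬝ᵥ v)) ^ 2 := by
    rw [mul_pow, Real.sq_sqrt (dotProduct_self_nonneg u),
      Real.sq_sqrt (dotProduct_self_nonneg v)]
    exact sq_sub_dotProduct_of_hasEigenvalue_symmOuter hμ hμE
  exact (sq_eq_sq_iff_eq_or_eq_neg.mp hsq).imp (fun h => by linarith) (fun h => by linarith)

theorem hasEigenvalue_symmOuter_eq_of_forall_abs_le {lam : ℝ} (huv : 0 < u ⬝ᵥ v)
    (hlam : HasEigenvalue (symmOuter u v).mulVecLin lam)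
    (hmax : ∀ μ, HasEigenvalue (symmOuter u v).mulVecLin μ → |μ| ≤ |lam|) :
    lam = u ⬝ᵥ v + √(u ⬝ᵥ u) * √(v ⬝ᵥ v) := by
  have hCS := dotProduct_le_sqrt_mul_sqrt u v
  have htop : 0 < u ⬝ᵥ v + √(u ⬝ᵥ u) * √(v ⬝ᵥ v) := by positivity
  have hle := hmax _ (hasEigenvalue_symmOuter_add_sqrt htop.ne')
  rw [abs_of_pos htop] at hle
  have hlam0 : lam ≠ 0 := abs_pos.mp (htop.trans_le hle)
  refine (hasEigenvalue_symmOuter_cases hlam0 hlam).resolve_right fun hbot => ?_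
  rw [hbot, abs_of_nonpos (sub_nonpos.mpr hCS)] at hle
  linarith

theorem hasEigenvalue_symmOuter_neg_of_ne {μ : ℝ}
    (hμE : HasEigenvalue (symmOuter u v).mulVecLin μ) (hμ : μ ≠ 0)
    (hne : μ ≠ u ⬝ᵥ v + √(u ⬝ᵥ u) * √(v ⬝ᵥ v)) : μ < 0 := by
  refine lt_of_le_of_ne ?_ hμ
  rw [(hasEigenvalue_symmOuter_cases hμ hμE).resolve_left hne]
  exact sub_nonpos.mpr (dotProduct_le_sqrt_mul_sqrt u v)

end Real

section Clusters

variable {k : ℕ} {n : Fin k → ℕ}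

theorem isEigenPair_iff_hasEigenvector {E : Matrix (Idx k n) (Idx k n) ℝ} {lam : ℝ}
    {v : Idx k n → ℝ} : IsEigenPair E lam v ↔ HasEigenvector E.mulVecLin lam v := by
  rw [IsEigenPair, hasEigenvector_iff, mem_eigenspace_iff, mulVecLin_apply, and_comm]

theorem isEigenvalue_iff_hasEigenvalue {E : Matrix (Idx k n) (Idx k n) ℝ} {lam : ℝ} :
    IsEigenvalue E lam ↔ HasEigenvalue E.mulVecLin lam := by
  simp only [IsEigenvalue, isEigenPair_iff_hasEigenvector]
  exact ⟨fun ⟨_, hv⟩ => hasEigenvalue_of_hasEigenvector hv, HasEigenvalue.exists_hasEigenvector⟩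

theorem comp_fst_mem_span_range_indicator (c : Fin k → ℝ) :
    (fun p : Idx k n => c p.1) ∈ Submodule.span ℝ (Set.range (indicator (k := k) (n := n))) := by
  have hsum : (fun p : Idx k n => c p.1) = ∑ a, c a • indicator a := by
    funext p
    simp [indicator]
  rw [hsum]
  exact Submodule.sum_mem _ fun a _ => Submodule.smul_mem _ _ (Submodule.subset_span ⟨a, rfl⟩)

/-- The vector `w` with `E = 1 wᵀ + w 1ᵀ`, constantly `1 / (2 n_a)` on cluster `a`. -/
noncomputable def halfInvSize (n : Fin k → ℕ) : Idx k n → ℝ :=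
  fun p => (n p.1 : ℝ)⁻¹ / 2

theorem eq_symmOuter_one_halfInvSize {E : Matrix (Idx k n) (Idx k n) ℝ}
    (hE : ∀ p q : Idx k n, E p q = (1 / 2) * ((n p.1 : ℝ)⁻¹ + (n q.1 : ℝ)⁻¹)) :
    E = symmOuter 1 (halfInvSize n) := by
  ext p q
  simp only [hE, symmOuter, Matrix.add_apply, vecMulVec_apply, halfInvSize, Pi.one_apply]
  ring

theorem one_dotProduct_halfInvSize (hn : ∀ a, 0 < n a) :
    1 ⬝ᵥ halfInvSize n = (k : ℝ) / 2 := by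
  have hcluster (a : Fin k) : ∑ i : Fin (n a), halfInvSize n ⟨a, i⟩ = 1 / 2 := by
    have hna : (n a : ℝ) ≠ 0 := Nat.cast_ne_zero.mpr (hn a).ne'
    simp only [halfInvSize, Finset.sum_const, Finset.card_univ, Fintype.card_fin, nsmul_eq_mul]
    field_simp
  rw [one_dotProduct, Fintype.sum_sigma, Finset.sum_congr rfl fun a _ => hcluster a,
    Finset.sum_const, Finset.card_univ, Fintype.card_fin, nsmul_eq_mul, mul_one_div]

theorem span_one_halfInvSize_le :
    Submodule.span ℝ {1, halfInvSize n} ≤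
      Submodule.span ℝ (Set.range (indicator (k := k) (n := n))) := by
  rw [Submodule.span_le, Set.pair_subset_iff]
  exact ⟨comp_fst_mem_span_range_indicator fun _ => 1,
    comp_fst_mem_span_range_indicator fun a => (n a : ℝ)⁻¹ / 2⟩

end Clusters

/-- For the matrix `E` with blocks `E^{(a,b)} = (1/2)(1/n_a + 1/n_b)11ᵀ`:
(i) `rank E ∈ {1, 2}`; (ii) the eigenvalue of largest magnitude satisfies `λ ≥ k`;
(iii) if `rank E = 2`, the other nonzero eigenvalue is negative; (iv) eigenvectors with
nonzero eigenvalue lie in the span of the cluster indicators. -/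
theorem eigenstructure_of_E
    (k : ℕ) (hk : 0 < k) (n : Fin k → ℕ) (hn : ∀ a, 0 < n a)
    (E : Matrix (Idx k n) (Idx k n) ℝ)
    (hE : ∀ p q : Idx k n,
      E p q = (1 / 2) * ((n p.1 : ℝ)⁻¹ + (n q.1 : ℝ)⁻¹)) :
    (E.rank = 1 ∨ E.rank = 2) ∧
    (∀ lam : ℝ, IsEigenvalue E lam → (∀ μ : ℝ, IsEigenvalue E μ → |μ| ≤ |lam|) →
      (k : ℝ) ≤ lam) ∧
    (E.rank = 2 →
      ∀ lam μ : ℝ, IsEigenvalue E lam → IsEigenvalue E μ →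
        (∀ ν : ℝ, IsEigenvalue E ν → |ν| ≤ |lam|) → μ ≠ 0 → μ ≠ lam → μ < 0) ∧
    (∀ (lam : ℝ) (v : Idx k n → ℝ), lam ≠ 0 → IsEigenPair E lam v →
      v ∈ Submodule.span ℝ (Set.range (indicator (k := k) (n := n)))) := by
  obtain rfl := eq_symmOuter_one_halfInvSize hE
  have hdot := one_dotProduct_halfInvSize hn
  have hpos : 0 < 1 ⬝ᵥ halfInvSize n := by rw [hdot]; positivity
  simp only [isEigenvalue_iff_hasEigenvalue, isEigenPair_iff_hasEigenvector]
  refine ⟨?rank, fun lam hlam hmax => ?dominant, fun _ lam μ hlam hμ hmax hμ0 hne => ?other,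
    fun lam v hlam hv => ?span⟩
  case rank =>
    have hle := rank_symmOuter_le_two 1 (halfInvSize n)
    have hne := rank_symmOuter_ne_zero hpos.ne'
    omega
  case dominant =>
    have hCS := dotProduct_le_sqrt_mul_sqrt 1 (halfInvSize n)
    rw [hasEigenvalue_symmOuter_eq_of_forall_abs_le hpos hlam hmax]
    linarith
  case other =>
    rw [hasEigenvalue_symmOuter_eq_of_forall_abs_le hpos hlam hmax] at hne
    exact hasEigenvalue_symmOuter_neg_of_ne hμ hμ0 hne
  case span =>
    exact span_one_halfInvSize_le (mem_span_pair_of_hasEigenvector_symmOuter hlam hv)
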